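/- Assume αχ(M) ≤ 0, let p ∈ ln Ω with Σ_{i=1}^N p_i = 0 correspond to a constant α-curvature metric (K_i = s_α r_i^α for all i at p), and let F̃ : ℝ^N → ℝ be any convex C¹ function with ∂F̃/∂u_i = K̃_i − s_α r_i^α on ℝ^N. For each unit vector ξ ∈ ℝ^N with Σ_{i=1}^N ξ_i = 0, set φ_ξ(t) = F̃(p + tξ). Then φ_ξ'(0) = 0, φ_ξ' is nondecreasing on ℝ, and φ_ξ' is strictly increasing on (−δ, δ) for every δ with 0 < δ < dist(p, ∂(ln Ω)); in particular t = 0 is the unique zero of φ_ξ'. -/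

import Mathlib

/-!
Convexity of `F` makes `φ' = deriv (t ↦ F (p + t ξ))` monotone, and the curvature equation makes
it vanish at `0`. The content is strict monotonicity while `p + t ξ` stays in `ln Ω`.
There `φ'(t) = ∑ ξ_i (K_i − s_α r_i^α)` is differentiable and `φ''(t)` splits into two parts.

* The part from `−s_α r_i^α` is `−2π α χ` times a weighted variance of `ξ` with weights `r_i^α`,
  which is nonnegative because `α χ ≤ 0` (`hasDerivAt_alpha`).
* The part from `K` is a sum over faces of quadratic forms `−∑ ξ_i dθ_i(ξ)` (`hasDerivAt_curv`).
  For a triangle with radii `r_i`, inversive distances `c_i` (opposite to `i`), squared sides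
  `X, Y, Z` and `4 · area = T`, this form is `(2 / T) ∑ (V_k / l_k²) (ξ_i − ξ_j)²`, where
  `V_k = triV` is an explicit polynomial (`angle_bracket`). With `γ_k = c_k + c_i c_j ≥ 0`:
  `∑ V_k = T² / 4`, and
  `∑ V_i V_j l_k² = (T² / 4) r₁ r₂ r₃ ((2 + 2 c₁ c₂ c₃) r₁ r₂ r₃ + ∑ γ_k (r_i² + r_j²) r_k) > 0`.
  Moreover at most one `V_k` is negative (`triV_not_two_neg`). Hence the form is nonnegative and
  its kernel consists of the constants (`weighted_form_pos`).

If `φ''(t) = 0`, then `ξ` is constant on every face, hence constant by connectedness of the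
1-skeleton, hence zero since `∑ ξ_i = 0`, contradicting `∑ ξ_i² = 1`.
-/

open Real Filter Topology

namespace IDCP

variable {N : ℕ}

/-- The set of edges: 2-element subsets of vertices contained in some face. -/
def edges (Fc : Finset (Finset (Fin N))) : Finset (Finset (Fin N)) :=
  Fc.biUnion fun f => f.powersetCard 2

/-- `Fc` is the face set of a triangulation of a closed connected surface:
every face has 3 vertices, every edge lies in exactly two faces, and the
1-skeleton is connected. -/
structure IsTriangulation (Fc : Finset (Finset (Fin N))) : Prop where
  card3 : ∀ f ∈ Fc, f.card = 3
  edge2 : ∀ e ∈ edges Fc, (Fc.filter fun f => e ⊆ f).card = 2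
  conn : (SimpleGraph.fromRel fun i j => ({i, j} : Finset (Fin N)) ∈ edges Fc).Connected

/-- Euler characteristic χ(M) = N − |E| + |F|. -/
def chi (Fc : Finset (Finset (Fin N))) : ℤ :=
  (N : ℤ) - ((edges Fc).card : ℤ) + (Fc.card : ℤ)

/-- Edge length l_ij = √(r_i² + r_j² + 2 r_i r_j I_{ij}). -/
noncomputable def len (I : Finset (Fin N) → ℝ) (r : Fin N → ℝ) (i j : Fin N) : ℝ :=
  Real.sqrt (r i ^ 2 + r j ^ 2 + 2 * r i * r j * I {i, j})

/-- The cosine of the inner angle at `i` in triangle `{i,j,k}`. -/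
noncomputable def cosAng (I : Finset (Fin N) → ℝ) (r : Fin N → ℝ) (i j k : Fin N) : ℝ :=
  (len I r i j ^ 2 + len I r i k ^ 2 - len I r j k ^ 2) / (2 * len I r i j * len I r i k)

/-- The auxiliary function Λ. -/
noncomputable def Lam (x : ℝ) : ℝ :=
  if x ≤ -1 then π else if x ≤ 1 then Real.arccos x else 0

/-- Discrete Gaussian curvature K_i = 2π − Σ_{{i,j,k}∈F} θ_i^{jk}.  Every face
containing `i` appears exactly twice (once for each ordering of `j,k`), whence
the factor 1/2. -/
noncomputable def K (Fc : Finset (Finset (Fin N))) (I : Finset (Fin N) → ℝ)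
    (r : Fin N → ℝ) (i : Fin N) : ℝ :=
  2 * π - (1 / 2) * ∑ j, ∑ k,
    (if ({i, j, k} : Finset (Fin N)) ∈ Fc then Real.arccos (cosAng I r i j k) else 0)

/-- Extended curvature K̃_i = 2π − Σ θ̃_i^{jk}, using the generalized angles Λ. -/
noncomputable def Kt (Fc : Finset (Finset (Fin N))) (I : Finset (Fin N) → ℝ)
    (r : Fin N → ℝ) (i : Fin N) : ℝ :=
  2 * π - (1 / 2) * ∑ j, ∑ k,
    (if ({i, j, k} : Finset (Fin N)) ∈ Fc then Lam (cosAng I r i j k) else 0)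

/-- The set Ω of inversive distance circle packing metrics. -/
def Omega (Fc : Finset (Finset (Fin N))) (I : Finset (Fin N) → ℝ) : Set (Fin N → ℝ) :=
  {r | (∀ i, 0 < r i) ∧ ∀ i j k : Fin N, ({i, j, k} : Finset (Fin N)) ∈ Fc →
    len I r j k < len I r i j + len I r i k}

/-- s_α = 2πχ(M)/‖r‖_α^α. -/
noncomputable def sA (Fc : Finset (Finset (Fin N))) (α : ℝ) (r : Fin N → ℝ) : ℝ :=
  2 * π * (chi Fc : ℝ) / ∑ j, r j ^ α

/-- Back from u-coordinates: r_i = e^{u_i}. -/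
noncomputable def rOf (u : Fin N → ℝ) : Fin N → ℝ := fun i => Real.exp (u i)

/-- ln Ω, the image of Ω under the coordinate change r ↦ u, u_i = ln r_i. -/
def lnOmega (Fc : Finset (Finset (Fin N))) (I : Finset (Fin N) → ℝ) : Set (Fin N → ℝ) :=
  {u | rOf u ∈ Omega Fc I}

/-- `u` solves the α-flow du_i/dt = s_α r_i^α − K_i on the time set `D`,
staying in ln Ω. -/
def IsFlowSol (Fc : Finset (Finset (Fin N))) (I : Finset (Fin N) → ℝ) (α : ℝ)
    (D : Set ℝ) (u : ℝ → Fin N → ℝ) : Prop :=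
  ∀ t ∈ D, rOf (u t) ∈ Omega Fc I ∧
    ∀ i, HasDerivWithinAt (fun s => u s i)
      (sA Fc α (rOf (u t)) * rOf (u t) i ^ α - K Fc I (rOf (u t)) i) D t

/-- `u` solves the extended α-flow du_i/dt = s_α r_i^α − K̃_i on the time set `D`. -/
def IsExtFlowSol (Fc : Finset (Finset (Fin N))) (I : Finset (Fin N) → ℝ) (α : ℝ)
    (D : Set ℝ) (u : ℝ → Fin N → ℝ) : Prop :=
  ∀ t ∈ D, ∀ i, HasDerivWithinAt (fun s => u s i)
      (sA Fc α (rOf (u t)) * rOf (u t) i ^ α - Kt Fc I (rOf (u t)) i) D t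

/-- Lk(A): pairs (e,v) with both endpoints of e outside A, v ∈ A, and e,v spanning a face. -/
def Lk (Fc : Finset (Finset (Fin N))) (A : Finset (Fin N)) :
    Finset (Finset (Fin N) × Fin N) :=
  ((edges Fc) ×ˢ (Finset.univ : Finset (Fin N))).filter fun p =>
    (∀ x ∈ p.1, x ∉ A) ∧ p.2 ∈ A ∧ insert p.2 p.1 ∈ Fc

/-- Euler characteristic χ(F_A) of the subcomplex spanned by A. -/
def chiSub (Fc : Finset (Finset (Fin N))) (A : Finset (Fin N)) : ℤ :=
  (A.card : ℤ) - (((edges Fc).filter (fun e => e ⊆ A)).card : ℤ)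
    + ((Fc.filter (fun f => f ⊆ A)).card : ℤ)

/-- The lower bound −Σ_{(e,v)∈Lk(A)}(π − Λ(I_e)) + 2πχ(F_A) defining Y_A. -/
noncomputable def Ybound (Fc : Finset (Finset (Fin N))) (I : Finset (Fin N) → ℝ)
    (A : Finset (Fin N)) : ℝ :=
  -(∑ p ∈ Lk Fc A, (π - Lam (I p.1))) + 2 * π * (chiSub Fc A : ℝ)

/-- x ∈ Y. -/
noncomputable def memY (Fc : Finset (Finset (Fin N))) (I : Finset (Fin N) → ℝ)
    (x : Fin N → ℝ) : Prop :=
  (∑ i, x i) = 2 * π * (chi Fc : ℝ) ∧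
    ∀ A : Finset (Fin N), A.Nonempty → A ≠ Finset.univ → Ybound Fc I A < ∑ i ∈ A, x i

/-- x ∈ Ȳ. -/
noncomputable def memYbar (Fc : Finset (Finset (Fin N))) (I : Finset (Fin N) → ℝ)
    (x : Fin N → ℝ) : Prop :=
  (∑ i, x i) = 2 * π * (chi Fc : ℝ) ∧
    ∀ A : Finset (Fin N), A.Nonempty → A ≠ Finset.univ → Ybound Fc I A ≤ ∑ i ∈ A, x i

/-- The gradient of the extended α-potential: G(u)_i = K̃_i(r) − s_α(r) r_i^α,
with r = e^u. -/
noncomputable def extGrad (Fc : Finset (Finset (Fin N))) (I : Finset (Fin N) → ℝ)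
    (α : ℝ) (u : Fin N → ℝ) (i : Fin N) : ℝ :=
  Kt Fc I (rOf u) i - sA Fc α (rOf u) * rOf u i ^ α

/-! ### The quadratic form of a single triangle -/

/-- The numerator of the weight of the edge opposite to the first vertex: in terms of
the curvatures `κ = 1 / r` it is `r₁² r₂² r₃² κ₁ h₁` with
`h₁ = κ₁ (1 - c₁²) + κ₂ (c₃ + c₁ c₂) + κ₃ (c₂ + c₁ c₃)`. -/
def triV (r1 r2 r3 c1 c2 c3 : ℝ) : ℝ :=
  r2 * r3 * (r2 * r3 * (1 - c1 ^ 2) + r1 * r2 * (c2 + c1 * c3) + r1 * r3 * (c3 + c1 * c2))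

/-- Two negative numerators would force `(c₁² - 1) (c₂² - 1) > (c₃ + c₁ c₂)²` with `c₁, c₂ > 1`. -/
theorem triV_not_two_neg {r1 r2 r3 c1 c2 c3 : ℝ} (h1 : 0 < r1) (h2 : 0 < r2) (h3 : 0 < r3)
    (k1 : 0 ≤ c1) (k2 : 0 ≤ c2) (k3 : 0 ≤ c3)
    (n1 : triV r1 r2 r3 c1 c2 c3 < 0) (n2 : triV r2 r3 r1 c2 c3 c1 < 0) : False := by
  unfold triV at n1 n2
  have m1 : r2 * r3 * (1 - c1 ^ 2) + r1 * r2 * (c2 + c1 * c3) + r1 * r3 * (c3 + c1 * c2) < 0 := by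
    by_contra! h
    have := mul_nonneg (mul_pos h2 h3).le h
    linarith
  have m2 : r3 * r1 * (1 - c2 ^ 2) + r2 * r3 * (c3 + c2 * c1) + r2 * r1 * (c1 + c2 * c3) < 0 := by
    by_contra! h
    have := mul_nonneg (mul_pos h3 h1).le h
    linarith
  have g1 : 0 ≤ r1 * r2 * (c2 + c1 * c3) := by positivity
  have g2 : 0 ≤ r2 * r1 * (c1 + c2 * c3) := by positivity
  have g3 : 0 ≤ c1 * c2 := by positivity
  have a1 : r1 * (c3 + c1 * c2) < r2 * (c1 ^ 2 - 1) := by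
    by_contra! h
    have := mul_le_mul_of_nonneg_left h h3.le
    nlinarith
  have a2 : r2 * (c3 + c1 * c2) < r1 * (c2 ^ 2 - 1) := by
    by_contra! h
    have := mul_le_mul_of_nonneg_left h h3.le
    nlinarith
  have b1 : r1 * (c1 * c2) < r2 * (c1 ^ 2 - 1) :=
    lt_of_le_of_lt (mul_le_mul_of_nonneg_left (by linarith) h1.le) a1
  have b2 : r2 * (c1 * c2) < r1 * (c2 ^ 2 - 1) :=
    lt_of_le_of_lt (mul_le_mul_of_nonneg_left (by linarith) h2.le) a2
  have e1 : 0 < c1 ^ 2 - 1 := pos_of_mul_pos_right (lt_of_le_of_lt (by positivity) b1) h2.le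
  have e2 : 0 < c2 ^ 2 - 1 := pos_of_mul_pos_right (lt_of_le_of_lt (by positivity) b2) h1.le
  have mm : (r1 * (c1 * c2)) * (r2 * (c1 * c2)) < (r2 * (c1 ^ 2 - 1)) * (r1 * (c2 ^ 2 - 1)) :=
    mul_lt_mul'' b1 b2 (by positivity) (by positivity)
  have : (r1 * r2) * (c1 ^ 2 + c2 ^ 2 - 1) < 0 := by nlinarith
  have : 0 < (r1 * r2) * (c1 ^ 2 + c2 ^ 2 - 1) := by
    apply mul_pos (mul_pos h1 h2); linarith
  linarith

/-- A weighted sum of squared differences on three points, two of whose weights are nonnegative,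
is definite modulo constants as soon as the second symmetric function of the weights is
positive. -/
theorem weighted_form_pos_aux {w1 w2 w3 x1 x2 x3 : ℝ} (hw : 0 < w1 * w2 + w2 * w3 + w3 * w1)
    (h2 : 0 ≤ w2) (h3 : 0 ≤ w3) (hx : ¬ (x1 = x2 ∧ x2 = x3)) :
    0 < w1 * (x2 - x3) ^ 2 + w2 * (x3 - x1) ^ 2 + w3 * (x1 - x2) ^ 2 := by
  have hs : 0 < w2 + w3 := by
    rcases (add_nonneg h2 h3).lt_or_eq with h | h
    · exact h
    · have e2 : w2 = 0 := by linarith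
      have e3 : w3 = 0 := by linarith
      simp [e2, e3] at hw
  have key : (w2 + w3) * (w1 * (x2 - x3) ^ 2 + w2 * (x3 - x1) ^ 2 + w3 * (x1 - x2) ^ 2)
      = ((w2 + w3) * (x1 - x2) + w2 * (x2 - x3)) ^ 2
        + (w1 * w2 + w2 * w3 + w3 * w1) * (x2 - x3) ^ 2 := by ring
  refine (mul_pos_iff_of_pos_left hs).1 ?_
  rw [key]
  by_cases h : x2 = x3
  · have h' : x1 - x2 ≠ 0 := fun h0 => hx ⟨by linarith, h⟩
    have : (w2 + w3) * (x1 - x2) ≠ 0 := mul_ne_zero hs.ne' h'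
    subst h
    simpa using (sq_pos_of_ne_zero this)
  · have : 0 < (x2 - x3) ^ 2 := sq_pos_of_ne_zero (sub_ne_zero.2 h)
    positivity

/-- The same with the sign condition in symmetric form: no two weights are negative. -/
theorem weighted_form_pos {w1 w2 w3 x1 x2 x3 : ℝ} (hw : 0 < w1 * w2 + w2 * w3 + w3 * w1)
    (h12 : ¬ (w1 < 0 ∧ w2 < 0)) (h23 : ¬ (w2 < 0 ∧ w3 < 0)) (h31 : ¬ (w3 < 0 ∧ w1 < 0))
    (hx : ¬ (x1 = x2 ∧ x2 = x3)) :
    0 < w1 * (x2 - x3) ^ 2 + w2 * (x3 - x1) ^ 2 + w3 * (x1 - x2) ^ 2 := by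
  by_cases n2 : w2 < 0
  · have n3 : 0 ≤ w3 := not_lt.1 fun h => h23 ⟨n2, h⟩
    have n1 : 0 ≤ w1 := not_lt.1 fun h => h12 ⟨h, n2⟩
    have := weighted_form_pos_aux (w1 := w2) (w2 := w3) (w3 := w1) (x1 := x2) (x2 := x3) (x3 := x1)
      (by linarith) n3 n1 (by rintro ⟨a, b⟩; exact hx ⟨by rw [← b, ← a], a⟩)
    linarith
  by_cases n3 : w3 < 0
  · have n1 : 0 ≤ w1 := not_lt.1 fun h => h31 ⟨n3, h⟩
    have := weighted_form_pos_aux (w1 := w3) (w2 := w1) (w3 := w2) (x1 := x3) (x2 := x1) (x3 := x2)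
      (by linarith) n1 (not_lt.1 n2) (by rintro ⟨a, b⟩; exact hx ⟨b, by rw [← b, ← a]⟩)
    linarith
  · exact weighted_form_pos_aux hw (not_lt.1 n2) (not_lt.1 n3) hx

/-- The squared side of a triangle joining circles of radii `a`, `b` of inversive distance `c`. -/
def sqLen (a b c : ℝ) : ℝ := a ^ 2 + b ^ 2 + 2 * a * b * c

theorem sqLen_pos {a b c : ℝ} (ha : 0 < a) (hb : 0 < b) (hc : 0 ≤ c) : 0 < sqLen a b c := by
  unfold sqLen; positivity

theorem sqLen_comm (a b c : ℝ) : sqLen a b c = sqLen b a c := by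
  unfold sqLen; ring

/-- Half the derivative of `sqLen` when `(log a)' = x` and `(log b)' = y`. -/
def sqLenD (a b c x y : ℝ) : ℝ := (a ^ 2 + a * b * c) * x + (b ^ 2 + a * b * c) * y

/-- Minus the derivative of an angle with adjacent squared sides `Y`, `Z` and opposite squared
side `X`, multiplied by `4 · area`; the primed arguments are half the derivatives of the squared
sides. -/
noncomputable def angD (X Y Z X' Y' Z' : ℝ) : ℝ :=
  2 * (Y' + Z' - X') - (Y + Z - X) * (Y' / Y + Z' / Z)

/-- Minus `4 · area` times the variation of the angle at the first vertex is a weighted sum of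
differences; the weight of an edge is the same seen from either endpoint. -/
theorem angle_bracket {r1 r2 r3 c1 c2 c3 : ℝ} (x1 x2 x3 : ℝ)
    (h1 : 0 < r1) (h2 : 0 < r2) (h3 : 0 < r3) (k2 : 0 ≤ c2) (k3 : 0 ≤ c3) :
    angD (sqLen r2 r3 c1) (sqLen r3 r1 c2) (sqLen r1 r2 c3)
      (sqLenD r2 r3 c1 x2 x3) (sqLenD r3 r1 c2 x3 x1) (sqLenD r1 r2 c3 x1 x2)
    = 2 * (triV r3 r1 r2 c3 c1 c2 / sqLen r1 r2 c3 * (x1 - x2)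
        + triV r2 r3 r1 c2 c3 c1 / sqLen r3 r1 c2 * (x1 - x3)) := by
  have hY := (sqLen_pos h3 h1 k2).ne'
  have hZ := (sqLen_pos h1 h2 k3).ne'
  unfold angD
  field_simp
  unfold sqLen sqLenD triV
  ring

/-- The identity behind definiteness: after clearing denominators, the second symmetric function
of the edge weights is `4 · area²` times a manifestly positive polynomial. -/
theorem sum_triV_mul_sqLen (r1 r2 r3 c1 c2 c3 : ℝ) :
    4 * (triV r1 r2 r3 c1 c2 c3 * triV r2 r3 r1 c2 c3 c1 * sqLen r1 r2 c3
      + triV r2 r3 r1 c2 c3 c1 * triV r3 r1 r2 c3 c1 c2 * sqLen r2 r3 c1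
      + triV r3 r1 r2 c3 c1 c2 * triV r1 r2 r3 c1 c2 c3 * sqLen r3 r1 c2)
    = (4 * sqLen r3 r1 c2 * sqLen r1 r2 c3
        - (sqLen r3 r1 c2 + sqLen r1 r2 c3 - sqLen r2 r3 c1) ^ 2) *
      (r1 * r2 * r3 * ((2 + 2 * c1 * c2 * c3) * (r1 * r2 * r3)
        + (c3 + c1 * c2) * (r1 ^ 2 + r2 ^ 2) * r3
        + (c1 + c2 * c3) * (r2 ^ 2 + r3 ^ 2) * r1
        + (c2 + c3 * c1) * (r3 ^ 2 + r1 ^ 2) * r2)) := by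
  unfold sqLen triV
  ring

/-- The Hessian form of a nondegenerate triangle is definite modulo constants. -/
theorem tri_form_pos {r1 r2 r3 c1 c2 c3 : ℝ} (x1 x2 x3 : ℝ)
    (h1 : 0 < r1) (h2 : 0 < r2) (h3 : 0 < r3) (k1 : 0 ≤ c1) (k2 : 0 ≤ c2) (k3 : 0 ≤ c3)
    (hP : 0 < 4 * sqLen r3 r1 c2 * sqLen r1 r2 c3
        - (sqLen r3 r1 c2 + sqLen r1 r2 c3 - sqLen r2 r3 c1) ^ 2)
    (hx : ¬ (x1 = x2 ∧ x2 = x3)) :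
    0 < x1 * angD (sqLen r2 r3 c1) (sqLen r3 r1 c2) (sqLen r1 r2 c3)
          (sqLenD r2 r3 c1 x2 x3) (sqLenD r3 r1 c2 x3 x1) (sqLenD r1 r2 c3 x1 x2)
      + x2 * angD (sqLen r3 r1 c2) (sqLen r1 r2 c3) (sqLen r2 r3 c1)
          (sqLenD r3 r1 c2 x3 x1) (sqLenD r1 r2 c3 x1 x2) (sqLenD r2 r3 c1 x2 x3)
      + x3 * angD (sqLen r1 r2 c3) (sqLen r2 r3 c1) (sqLen r3 r1 c2)
          (sqLenD r1 r2 c3 x1 x2) (sqLenD r2 r3 c1 x2 x3) (sqLenD r3 r1 c2 x3 x1) := by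
  rw [angle_bracket x1 x2 x3 h1 h2 h3 k2 k3, angle_bracket x2 x3 x1 h2 h3 h1 k3 k1,
    angle_bracket x3 x1 x2 h3 h1 h2 k1 k2]
  have hX := sqLen_pos h2 h3 k1
  have hY := sqLen_pos h3 h1 k2
  have hZ := sqLen_pos h1 h2 k3
  have hsum := sum_triV_mul_sqLen r1 r2 r3 c1 c2 c3
  have hM : 0 < (r1 * r2 * r3 * ((2 + 2 * c1 * c2 * c3) * (r1 * r2 * r3)
        + (c3 + c1 * c2) * (r1 ^ 2 + r2 ^ 2) * r3
        + (c1 + c2 * c3) * (r2 ^ 2 + r3 ^ 2) * r1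
        + (c2 + c3 * c1) * (r3 ^ 2 + r1 ^ 2) * r2)) := by positivity
  have hpos := mul_pos hP hM
  have n12 := triV_not_two_neg h1 h2 h3 k1 k2 k3
  have n23 := triV_not_two_neg h2 h3 h1 k2 k3 k1
  have n31 := triV_not_two_neg h3 h1 h2 k3 k1 k2
  rw [← hsum] at hpos
  generalize triV r1 r2 r3 c1 c2 c3 = V1 at *
  generalize triV r2 r3 r1 c2 c3 c1 = V2 at *
  generalize triV r3 r1 r2 c3 c1 c2 = V3 at *
  generalize sqLen r2 r3 c1 = X at *
  generalize sqLen r3 r1 c2 = Y at *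
  generalize sqLen r1 r2 c3 = Z at *
  have hneg : ∀ {v l : ℝ}, 0 < l → v / l < 0 → v < 0 := fun hl h =>
    not_le.1 fun hv => absurd h (not_lt.2 (div_nonneg hv hl.le))
  have := weighted_form_pos (w1 := V1 / X) (w2 := V2 / Y) (w3 := V3 / Z) (x1 := x1) (x2 := x2)
    (x3 := x3) ?_ (fun h => n12 (hneg hX h.1) (hneg hY h.2))
    (fun h => n23 (hneg hY h.1) (hneg hZ h.2)) (fun h => n31 (hneg hZ h.1) (hneg hX h.2)) hx
  · nlinarith
  · have : V1 / X * (V2 / Y) + V2 / Y * (V3 / Z) + V3 / Z * (V1 / X)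
        = (V1 * V2 * Z + V2 * V3 * X + V3 * V1 * Y) / (X * Y * Z) := by
      field_simp
    rw [this]
    apply div_pos _ (by positivity)
    linarith

/-! ### Differentiating angles -/

/-- Heron's formula in factored form: `16 · area²` is positive under the triangle inequalities. -/
theorem heron_pos {X Y Z : ℝ} (hX : 0 < X) (hY : 0 < Y) (hZ : 0 < Z)
    (t1 : √X < √Y + √Z) (t2 : √Y < √X + √Z) (t3 : √Z < √X + √Y) :
    0 < 4 * Y * Z - (Y + Z - X) ^ 2 := by
  have eX := Real.sq_sqrt hX.le
  have eY := Real.sq_sqrt hY.le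
  have eZ := Real.sq_sqrt hZ.le
  have pX := Real.sqrt_pos.2 hX
  have pY := Real.sqrt_pos.2 hY
  have pZ := Real.sqrt_pos.2 hZ
  generalize √X = x at *
  generalize √Y = y at *
  generalize √Z = z at *
  subst eX eY eZ
  have : 4 * y ^ 2 * z ^ 2 - (y ^ 2 + z ^ 2 - x ^ 2) ^ 2
      = ((x + y + z) * (y + z - x)) * ((x + z - y) * (x + y - z)) := by ring
  rw [this]
  apply mul_pos <;> apply mul_pos <;> linarith

theorem hasDerivAt_angle {X Y Z : ℝ → ℝ} {X' Y' Z' t : ℝ}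
    (dX : HasDerivAt X (2 * X') t) (dY : HasDerivAt Y (2 * Y') t) (dZ : HasDerivAt Z (2 * Z') t)
    (hY : 0 < Y t) (hZ : 0 < Z t)
    (hP : 0 < 4 * Y t * Z t - (Y t + Z t - X t) ^ 2) :
    HasDerivAt (fun s => Real.arccos ((Y s + Z s - X s) / (2 * √(Y s) * √(Z s))))
      (-(angD (X t) (Y t) (Z t) X' Y' Z' / √(4 * Y t * Z t - (Y t + Z t - X t) ^ 2))) t := by
  have pY := Real.sqrt_pos.2 hY
  have pZ := Real.sqrt_pos.2 hZ
  have eY := Real.sq_sqrt hY.le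
  have eZ := Real.sq_sqrt hZ.le
  set y := √(Y t) with hy
  set z := √(Z t) with hz
  have hq : ((Y t + Z t - X t) / (2 * y * z)) ^ 2 < 1 := by
    rw [div_pow, div_lt_one (by positivity)]
    have : (2 * y * z) ^ 2 = 4 * Y t * Z t := by rw [← eY, ← eZ]; ring
    linarith
  have hlt := abs_lt.1 ((sq_lt_one_iff_abs_lt_one _).1 hq)
  have dq : HasDerivAt (fun s => (Y s + Z s - X s) / (2 * √(Y s) * √(Z s)))
      (angD (X t) (Y t) (Z t) X' Y' Z' / (2 * y * z)) t := by
    have := ((dY.add dZ).sub dX).div (((dY.sqrt hY.ne').const_mul 2).mul (dZ.sqrt hZ.ne'))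
      (by change 2 * y * z ≠ 0; positivity)
    refine this.congr_deriv ?_
    simp only [Pi.add_apply, Pi.sub_apply, Pi.mul_apply]
    rw [← hy, ← hz]
    unfold angD
    rw [← eY, ← eZ]
    field_simp
  have := (Real.hasDerivAt_arccos hlt.1.ne' hlt.2.ne).comp t dq
  refine this.congr_deriv ?_
  have hs : √(1 - ((Y t + Z t - X t) / (2 * y * z)) ^ 2)
      = √(4 * Y t * Z t - (Y t + Z t - X t) ^ 2) / (2 * y * z) := by
    have : 1 - ((Y t + Z t - X t) / (2 * y * z)) ^ 2
        = (4 * Y t * Z t - (Y t + Z t - X t) ^ 2) / (2 * y * z) ^ 2 := by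
      rw [← eY, ← eZ]
      field_simp
      ring
    rw [this, Real.sqrt_div hP.le, Real.sqrt_sq (by positivity)]
  rw [hs]
  have := (Real.sqrt_pos.2 hP).ne'
  field_simp

theorem hasDerivAt_sqLen {a b : ℝ → ℝ} {x y t : ℝ} (c : ℝ)
    (da : HasDerivAt a (x * a t) t) (db : HasDerivAt b (y * b t) t) :
    HasDerivAt (fun s => sqLen (a s) (b s) c) (2 * sqLenD (a t) (b t) c x y) t := by
  have := ((da.pow 2).add (db.pow 2)).add (((da.const_mul 2).mul db).mul_const c)
  refine this.congr_deriv ?_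
  unfold sqLenD
  simp only [Nat.cast_ofNat]
  ring

theorem cosAng_eq {I : Finset (Fin N) → ℝ} {r : Fin N → ℝ} {i j k : Fin N}
    (hij : 0 < sqLen (r i) (r j) (I {i, j})) (hjk : 0 < sqLen (r j) (r k) (I {j, k}))
    (hki : 0 < sqLen (r k) (r i) (I {k, i})) :
    cosAng I r i j k
      = (sqLen (r k) (r i) (I {k, i}) + sqLen (r i) (r j) (I {i, j})
          - sqLen (r j) (r k) (I {j, k}))
        / (2 * √(sqLen (r k) (r i) (I {k, i})) * √(sqLen (r i) (r j) (I {i, j}))) := by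
  have e1 : len I r i j = √(sqLen (r i) (r j) (I {i, j})) := rfl
  have e2 : len I r i k = √(sqLen (r k) (r i) (I {k, i})) := by
    rw [sqLen_comm, Finset.pair_comm]; rfl
  have e3 : len I r j k = √(sqLen (r j) (r k) (I {j, k})) := rfl
  unfold cosAng
  rw [e1, e2, e3, Real.sq_sqrt hij.le, Real.sq_sqrt hjk.le, Real.sq_sqrt hki.le]
  congr 1 <;> ring

theorem pair_mem_edges {Fc : Finset (Finset (Fin N))} (hT : IsTriangulation Fc) {i j k : Fin N}
    (h : ({i, j, k} : Finset (Fin N)) ∈ Fc) : ({i, j} : Finset (Fin N)) ∈ edges Fc := by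
  have h3 := hT.card3 _ h
  have hij : i ≠ j := by
    rintro rfl
    rw [Finset.insert_eq_of_mem (by simp)] at h3
    have := Finset.card_le_two (a := i) (b := k)
    omega
  refine Finset.mem_biUnion.2 ⟨_, h, Finset.mem_powersetCard.2 ⟨?_, Finset.card_pair hij⟩⟩
  intro x hx
  simp only [Finset.mem_insert, Finset.mem_singleton] at hx ⊢
  tauto

theorem face_rotate (i j k : Fin N) :
    ({j, k, i} : Finset (Fin N)) = {i, j, k} := by
  ext x; simp only [Finset.mem_insert, Finset.mem_singleton]; tauto

theorem hasDerivAt_rOf (p ξ : Fin N → ℝ) (t : ℝ) (i : Fin N) :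
    HasDerivAt (fun s : ℝ => rOf (p + s • ξ) i) (ξ i * rOf (p + t • ξ) i) t := by
  have h : HasDerivAt (fun s : ℝ => p i + s * ξ i) (ξ i) t := by
    simpa using ((hasDerivAt_id t).mul_const (ξ i)).const_add (p i)
  have := h.exp
  simpa [rOf, mul_comm] using this

/-- Along a line in `ln Ω`, minus the `ξ`-weighted sum of the angles of a face has nonnegative
derivative, which vanishes only if `ξ` is constant on the face. -/
theorem hasDerivAt_face {Fc : Finset (Finset (Fin N))} (hT : IsTriangulation Fc)
    {I : Finset (Fin N) → ℝ} (hI : ∀ e ∈ edges Fc, 0 ≤ I e) (p ξ : Fin N → ℝ) {t : ℝ}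
    (ht : p + t • ξ ∈ lnOmega Fc I) {i j k : Fin N} (hf : ({i, j, k} : Finset (Fin N)) ∈ Fc) :
    ∃ d : ℝ, 0 ≤ d ∧ (d = 0 → ξ i = ξ j ∧ ξ j = ξ k) ∧
      HasDerivAt (fun s : ℝ =>
        -(ξ i * Real.arccos (cosAng I (rOf (p + s • ξ)) i j k)
          + ξ j * Real.arccos (cosAng I (rOf (p + s • ξ)) j k i)
          + ξ k * Real.arccos (cosAng I (rOf (p + s • ξ)) k i j))) d t := by
  have hf2 : ({j, k, i} : Finset (Fin N)) ∈ Fc := by rwa [face_rotate]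
  have hf3 : ({k, i, j} : Finset (Fin N)) ∈ Fc := by rwa [face_rotate]
  have c1 := hI _ (pair_mem_edges hT hf2)
  have c2 := hI _ (pair_mem_edges hT hf3)
  have c3 := hI _ (pair_mem_edges hT hf)
  have rpos : ∀ (s : ℝ) (i : Fin N), 0 < rOf (p + s • ξ) i := fun s i => Real.exp_pos _
  have pX := fun s => sqLen_pos (rpos s j) (rpos s k) c1
  have pY := fun s => sqLen_pos (rpos s k) (rpos s i) c2
  have pZ := fun s => sqLen_pos (rpos s i) (rpos s j) c3
  have dX := hasDerivAt_sqLen (I {j, k}) (hasDerivAt_rOf p ξ t j) (hasDerivAt_rOf p ξ t k)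
  have dY := hasDerivAt_sqLen (I {k, i}) (hasDerivAt_rOf p ξ t k) (hasDerivAt_rOf p ξ t i)
  have dZ := hasDerivAt_sqLen (I {i, j}) (hasDerivAt_rOf p ξ t i) (hasDerivAt_rOf p ξ t j)
  have lcomm : ∀ a b, len I (rOf (p + t • ξ)) a b = len I (rOf (p + t • ξ)) b a := fun a b => by
    have := sqLen_comm (rOf (p + t • ξ) a) (rOf (p + t • ξ) b) (I {a, b})
    unfold sqLen at this
    unfold len
    rw [this, Finset.pair_comm]
  have hP : 0 < 4 * sqLen (rOf (p + t • ξ) k) (rOf (p + t • ξ) i) (I {k, i})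
        * sqLen (rOf (p + t • ξ) i) (rOf (p + t • ξ) j) (I {i, j})
      - (sqLen (rOf (p + t • ξ) k) (rOf (p + t • ξ) i) (I {k, i})
        + sqLen (rOf (p + t • ξ) i) (rOf (p + t • ξ) j) (I {i, j})
        - sqLen (rOf (p + t • ξ) j) (rOf (p + t • ξ) k) (I {j, k})) ^ 2 := by
    have t1 := ht.2 i j k hf
    have t2 := ht.2 j k i hf2
    have t3 := ht.2 k i j hf3
    rw [lcomm i k] at t1
    rw [lcomm j i] at t2
    rw [lcomm k j] at t3
    refine heron_pos (pX t) (pY t) (pZ t) ?_ ?_ ?_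
    · exact t1.trans_eq (add_comm _ _)
    · exact t2
    · exact t3.trans_eq (add_comm _ _)
  have a1 := hasDerivAt_angle dX dY dZ (pY t) (pZ t) hP
  have a2 := hasDerivAt_angle dY dZ dX (pZ t) (pX t) (by linarith)
  have a3 := hasDerivAt_angle dZ dX dY (pX t) (pY t) (by linarith)
  have form := tri_form_pos (ξ i) (ξ j) (ξ k) (rpos t i) (rpos t j) (rpos t k) c1 c2 c3 hP
  have hsum : HasDerivAt (fun s : ℝ =>
        -(ξ i * Real.arccos (cosAng I (rOf (p + s • ξ)) i j k)
          + ξ j * Real.arccos (cosAng I (rOf (p + s • ξ)) j k i)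
          + ξ k * Real.arccos (cosAng I (rOf (p + s • ξ)) k i j))) _ t :=
    (((a1.const_mul (ξ i)).add (a2.const_mul (ξ j))).add
      (a3.const_mul (ξ k))).neg.congr_of_eventuallyEq (Eventually.of_forall fun s => by
        simp only [Pi.neg_apply, Pi.add_apply]
        rw [cosAng_eq (pZ s) (pX s) (pY s), cosAng_eq (pX s) (pY s) (pZ s),
          cosAng_eq (pY s) (pZ s) (pX s)])
  set X := sqLen (rOf (p + t • ξ) j) (rOf (p + t • ξ) k) (I {j, k})
  set Y := sqLen (rOf (p + t • ξ) k) (rOf (p + t • ξ) i) (I {k, i})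
  set Z := sqLen (rOf (p + t • ξ) i) (rOf (p + t • ξ) j) (I {i, j})
  have q2 : 4 * Z * X - (Z + X - Y) ^ 2 = 4 * Y * Z - (Y + Z - X) ^ 2 := by ring
  have q3 : 4 * X * Y - (X + Y - Z) ^ 2 = 4 * Y * Z - (Y + Z - X) ^ 2 := by ring
  rw [q2, q3] at hsum
  have hS := Real.sqrt_pos.2 hP
  generalize √(4 * Y * Z - (Y + Z - X) ^ 2) = S at *
  by_cases hx : ξ i = ξ j ∧ ξ j = ξ k
  · refine ⟨0, le_rfl, fun _ => hx, hsum.congr_deriv ?_⟩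
    rw [← hx.2, ← hx.1]
    -- For constant `ξ` the three squared sides scale by the same factor.
    have s1 : ∀ a b c x, sqLenD a b c x x = x * sqLen a b c := fun a b c x => by
      unfold sqLenD sqLen; ring
    have s2 : ∀ a b c x : ℝ, 0 < a → 0 < b → 0 < c →
        angD a b c (x * a) (x * b) (x * c) = 0 := fun a b c x _ _ _ => by
      unfold angD; field_simp; ring
    simp only [s1]
    rw [s2 _ _ _ _ (pX t) (pY t) (pZ t), s2 _ _ _ _ (pY t) (pZ t) (pX t),
      s2 _ _ _ _ (pZ t) (pX t) (pY t)]
    simp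
  · have hpos := div_pos (form hx) hS
    exact ⟨_, hpos.le, fun h => absurd h hpos.ne', hsum.congr_deriv (by ring)⟩

/-! ### The curvature part and the connectedness argument -/

/-- A function constant on every face is constant, since the 1-skeleton is connected. -/
theorem const_of_const_on_faces {Fc : Finset (Finset (Fin N))} (hT : IsTriangulation Fc)
    {ξ : Fin N → ℝ}
    (h : ∀ i j k : Fin N, ({i, j, k} : Finset (Fin N)) ∈ Fc → ξ i = ξ j ∧ ξ j = ξ k)
    (i j : Fin N) : ξ i = ξ j := by
  have hedge : ∀ a b : Fin N, ({a, b} : Finset (Fin N)) ∈ edges Fc → ξ a = ξ b := by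
    intro a b hab
    obtain ⟨f, hf, hfab⟩ := Finset.mem_biUnion.1 hab
    have hsub := (Finset.mem_powersetCard.1 hfab).1
    obtain ⟨x, y, z, -, -, -, rfl⟩ := Finset.card_eq_three.1 (hT.card3 f hf)
    have hc := h x y z hf
    have ha := hsub (Finset.mem_insert_self a {b})
    have hb : b ∈ ({x, y, z} : Finset (Fin N)) := hsub (by simp)
    simp only [Finset.mem_insert, Finset.mem_singleton] at ha hb
    have hall : ∀ w, w = x ∨ w = y ∨ w = z → ξ w = ξ x := by
      rintro w (rfl | rfl | rfl)
      · rfl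
      · exact hc.1.symm
      · exact (hc.1.trans hc.2).symm
    rw [hall a ha, hall b hb]
  obtain ⟨w⟩ := hT.conn.preconnected i j
  induction w with
  | nil => rfl
  | cons hadj _ ih =>
    refine Eq.trans ?_ ih
    rcases (SimpleGraph.fromRel_adj _ _ _).1 hadj with ⟨-, h1 | h1⟩
    · exact hedge _ _ h1
    · exact (hedge _ _ h1).symm

theorem Lam_eq_arccos (x : ℝ) : Lam x = Real.arccos x := by
  unfold Lam
  split_ifs with h1 h2
  · exact (Real.arccos_of_le_neg_one h1).symm
  · rfl
  · exact (Real.arccos_of_one_le (not_le.1 h2).le).symm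

theorem Kt_eq_K (Fc : Finset (Finset (Fin N))) (I : Finset (Fin N) → ℝ) (r : Fin N → ℝ)
    (i : Fin N) : Kt Fc I r i = K Fc I r i := by
  unfold Kt K
  simp only [Lam_eq_arccos]

/-- The `ξ`-weighted total curvature, for `∑ ξ_i = 0`, regrouped by faces; each face occurs once
for each of the six orderings of its vertices. -/
theorem sum_mul_Kt (Fc : Finset (Finset (Fin N))) (I : Finset (Fin N) → ℝ) (r : Fin N → ℝ)
    {ξ : Fin N → ℝ} (hξ0 : ∑ i, ξ i = 0) :
    ∑ i, ξ i * Kt Fc I r i = (1 / 6) * ∑ i, ∑ j, ∑ k,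
      (if ({i, j, k} : Finset (Fin N)) ∈ Fc then
        -(ξ i * Real.arccos (cosAng I r i j k) + ξ j * Real.arccos (cosAng I r j k i)
          + ξ k * Real.arccos (cosAng I r k i j)) else 0) := by
  set g : Fin N → Fin N → Fin N → ℝ := fun i j k =>
    if ({i, j, k} : Finset (Fin N)) ∈ Fc then ξ i * Real.arccos (cosAng I r i j k) else 0 with hg
  have h1 : ∑ i, ξ i * Kt Fc I r i = -(1 / 2) * ∑ i, ∑ j, ∑ k, g i j k := by
    have : ∀ i, ξ i * Kt Fc I r i = 2 * π * ξ i + -(1 / 2) * ∑ j, ∑ k, g i j k := by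
      intro i
      rw [Kt_eq_K]
      unfold K
      have : ∑ j, ∑ k, g i j k = ξ i * ∑ j, ∑ k, (if ({i, j, k} : Finset (Fin N)) ∈ Fc then
          Real.arccos (cosAng I r i j k) else 0) := by
        simp only [hg, Finset.mul_sum, mul_ite, mul_zero]
      rw [this]
      ring
    rw [Finset.sum_congr rfl fun i _ => this i, Finset.sum_add_distrib, ← Finset.mul_sum,
      ← Finset.mul_sum, hξ0]
    ring
  have h2 : ∀ i j k, (if ({i, j, k} : Finset (Fin N)) ∈ Fc then
        -(ξ i * Real.arccos (cosAng I r i j k) + ξ j * Real.arccos (cosAng I r j k i)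
          + ξ k * Real.arccos (cosAng I r k i j)) else 0) = -(g i j k + g j k i + g k i j) := by
    intro i j k
    simp only [hg, face_rotate k i j, face_rotate i j k]
    split_ifs <;> ring
  have h3 : ∑ i, ∑ j, ∑ k, g j k i = ∑ i, ∑ j, ∑ k, g i j k := by
    rw [Finset.sum_comm]
    exact Finset.sum_congr rfl fun j _ => Finset.sum_comm
  have h4 : ∑ i, ∑ j, ∑ k, g k i j = ∑ i, ∑ j, ∑ k, g i j k := by
    rw [Finset.sum_congr rfl fun i _ => Finset.sum_comm, Finset.sum_comm]
  rw [h1]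
  simp only [h2, Finset.sum_neg_distrib, Finset.sum_add_distrib]
  rw [h3, h4]
  ring

/-- Strict positivity uses both normalizations of `ξ`: the derivative can vanish only for
constant `ξ`. -/
theorem hasDerivAt_curv {Fc : Finset (Finset (Fin N))} (hT : IsTriangulation Fc)
    {I : Finset (Fin N) → ℝ} (hI : ∀ e ∈ edges Fc, 0 ≤ I e) (p : Fin N → ℝ) {ξ : Fin N → ℝ}
    (hξ : ∑ i, ξ i ^ 2 = 1) (hξ0 : ∑ i, ξ i = 0) {t : ℝ} (ht : p + t • ξ ∈ lnOmega Fc I) :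
    ∃ d : ℝ, 0 < d ∧
      HasDerivAt (fun s : ℝ => ∑ i, ξ i * Kt Fc I (rOf (p + s • ξ)) i) d t := by
  have hex : ∀ i j k : Fin N, ∃ d : ℝ, 0 ≤ d ∧
      (({i, j, k} : Finset (Fin N)) ∈ Fc → d = 0 → ξ i = ξ j ∧ ξ j = ξ k) ∧
      HasDerivAt (fun s : ℝ => if ({i, j, k} : Finset (Fin N)) ∈ Fc then
        -(ξ i * Real.arccos (cosAng I (rOf (p + s • ξ)) i j k)
          + ξ j * Real.arccos (cosAng I (rOf (p + s • ξ)) j k i)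
          + ξ k * Real.arccos (cosAng I (rOf (p + s • ξ)) k i j)) else 0) d t := by
    intro i j k
    by_cases hf : ({i, j, k} : Finset (Fin N)) ∈ Fc
    · obtain ⟨d, h0, h1, h2⟩ := hasDerivAt_face hT hI p ξ ht hf
      exact ⟨d, h0, fun _ => h1, by simpa only [if_pos hf] using h2⟩
    · exact ⟨0, le_rfl, fun h => absurd h hf, by
        simpa only [if_neg hf] using hasDerivAt_const t (0 : ℝ)⟩
  choose d d0 d1 d2 using hex
  refine ⟨(1 / 6) * ∑ i, ∑ j, ∑ k, d i j k, ?_, ?_⟩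
  · have hk : ∀ i j, 0 ≤ ∑ k, d i j k := fun i j => Finset.sum_nonneg fun k _ => d0 i j k
    have hj : ∀ i, 0 ≤ ∑ j, ∑ k, d i j k := fun i => Finset.sum_nonneg fun j _ => hk i j
    have hi : 0 ≤ ∑ i, ∑ j, ∑ k, d i j k := Finset.sum_nonneg fun i _ => hj i
    rcases hi.lt_or_eq with h | h
    · positivity
    · exfalso
      have hz : ∀ i j k, d i j k = 0 := fun i j k => by
        have e1 := (Finset.sum_eq_zero_iff_of_nonneg fun i _ => hj i).1 h.symm i (Finset.mem_univ _)
        have e2 := (Finset.sum_eq_zero_iff_of_nonneg fun j _ => hk i j).1 e1 j (Finset.mem_univ _)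
        exact (Finset.sum_eq_zero_iff_of_nonneg fun k _ => d0 i j k).1 e2 k (Finset.mem_univ _)
      have hc := const_of_const_on_faces hT fun i j k hf => d1 i j k hf (hz i j k)
      have hzero : ∑ i, ξ i ^ 2 = 0 := by
        obtain ⟨i0⟩ := hT.conn.nonempty
        have : ∀ i, ξ i ^ 2 = ξ i0 * ξ i := fun i => by rw [sq, hc i i0]
        rw [Finset.sum_congr rfl fun i _ => this i, ← Finset.mul_sum, hξ0, mul_zero]
      linarith
  · simp only [sum_mul_Kt Fc I _ hξ0]
    refine HasDerivAt.const_mul _ ?_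
    exact HasDerivAt.fun_sum fun i _ => HasDerivAt.fun_sum fun j _ =>
      HasDerivAt.fun_sum fun k _ => d2 i j k

/-! ### The term with the α-curvature -/

/-- The derivative is `-2π α χ` times the variance of `ξ` with respect to the weights `r_i^α`. -/
theorem hasDerivAt_alpha {Fc : Finset (Finset (Fin N))} {α : ℝ} (hαχ : α * (chi Fc : ℝ) ≤ 0)
    [Nonempty (Fin N)] (p ξ : Fin N → ℝ) (t : ℝ) :
    ∃ d : ℝ, 0 ≤ d ∧ HasDerivAt (fun s : ℝ =>
      -∑ i, ξ i * (sA Fc α (rOf (p + s • ξ)) * rOf (p + s • ξ) i ^ α)) d t := by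
  set w : ℝ → Fin N → ℝ := fun s i => rOf (p + s • ξ) i ^ α with hw
  have wpos : ∀ s i, 0 < w s i := fun s i => Real.rpow_pos_of_pos (Real.exp_pos _) _
  have dw : ∀ i, HasDerivAt (fun s => w s i) (α * ξ i * w t i) t := by
    intro i
    have h0 : rOf (p + t • ξ) i ≠ 0 := (Real.exp_pos _).ne'
    refine ((hasDerivAt_rOf p ξ t i).rpow_const (Or.inl h0)).congr_deriv ?_
    simp only [hw]
    rw [Real.rpow_sub_one h0]
    field_simp
  have hS : 0 < ∑ i, w t i := Finset.sum_pos (fun i _ => wpos t i) Finset.univ_nonempty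
  have heq : (fun s : ℝ => -∑ i, ξ i * (sA Fc α (rOf (p + s • ξ)) * rOf (p + s • ξ) i ^ α))
      = fun s => -(2 * π * (chi Fc : ℝ)) * ((∑ i, ξ i * w s i) / ∑ i, w s i) := by
    funext s
    have : ∀ i, ξ i * (sA Fc α (rOf (p + s • ξ)) * rOf (p + s • ξ) i ^ α)
        = sA Fc α (rOf (p + s • ξ)) * (ξ i * w s i) := fun i => by simp only [hw]; ring
    rw [Finset.sum_congr rfl fun i _ => this i, ← Finset.mul_sum]
    unfold sA
    simp only [hw]
    ring
  rw [heq]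
  have dS : HasDerivAt (fun s => ∑ i, w s i) (α * ∑ i, ξ i * w t i) t := by
    refine (HasDerivAt.fun_sum fun i _ => dw i).congr_deriv ?_
    rw [Finset.mul_sum]
    exact Finset.sum_congr rfl fun i _ => by ring
  have dN : HasDerivAt (fun s => ∑ i, ξ i * w s i) (α * ∑ i, ξ i ^ 2 * w t i) t := by
    refine (HasDerivAt.fun_sum fun i _ => (dw i).const_mul (ξ i)).congr_deriv ?_
    rw [Finset.mul_sum]
    exact Finset.sum_congr rfl fun i _ => by ring
  refine ⟨_, ?_, (dN.div dS hS.ne').const_mul _⟩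
  have cs : (∑ i, ξ i * w t i) ^ 2 ≤ (∑ i, ξ i ^ 2 * w t i) * ∑ i, w t i :=
    Finset.sum_sq_le_sum_mul_sum_of_sq_le_mul _
      (fun i _ => mul_nonneg (sq_nonneg _) (wpos t i).le) (fun i _ => (wpos t i).le)
      (fun i _ => le_of_eq (by ring))
  have : -(2 * π * (chi Fc : ℝ)) * (((α * ∑ i, ξ i ^ 2 * w t i) * (∑ i, w t i)
        - (∑ i, ξ i * w t i) * (α * ∑ i, ξ i * w t i)) / (∑ i, w t i) ^ 2)
      = 2 * π * (-(α * (chi Fc : ℝ))) * (((∑ i, ξ i ^ 2 * w t i) * (∑ i, w t i)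
        - (∑ i, ξ i * w t i) ^ 2) / (∑ i, w t i) ^ 2) := by ring
  rw [this]
  exact mul_nonneg (mul_nonneg (by positivity) (by linarith))
    (div_nonneg (by linarith) (by positivity))

/-! ### The function `φ` -/

/-- The chain rule along a line, from the partial derivatives of a differentiable function. -/
theorem hasDerivAt_line {F : (Fin N → ℝ) → ℝ} (hF : Differentiable ℝ F)
    {G : (Fin N → ℝ) → Fin N → ℝ}
    (hG : ∀ u i, HasDerivAt (fun s : ℝ => F (Function.update u i s)) (G u i) (u i))
    (p ξ : Fin N → ℝ) (t : ℝ) :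
    HasDerivAt (fun s : ℝ => F (p + s • ξ)) (∑ i, ξ i * G (p + t • ξ) i) t := by
  have hl : HasDerivAt (fun s : ℝ => p + s • ξ) ξ t := by
    simpa using ((hasDerivAt_id t).smul_const ξ).const_add p
  have hd := (hF (p + t • ξ)).hasFDerivAt
  refine (hd.comp_hasDerivAt t hl).congr_deriv ?_
  generalize p + t • ξ = u at *
  have hpart : ∀ i, fderiv ℝ F u (Pi.single i 1) = G u i := by
    intro i
    have hu : HasDerivAt (Function.update u i) (Pi.single i 1) (u i) := hasDerivAt_update u i (u i)
    have hd' : HasFDerivAt F (fderiv ℝ F u) (Function.update u i (u i)) := by simpa using hd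
    exact (hd'.comp_hasDerivAt (u i) hu).unique (hG u i)
  conv_lhs => rw [pi_eq_sum_univ' ξ]
  rw [map_sum]
  refine Finset.sum_congr rfl fun i _ => ?_
  rw [map_smul, ← hpart i, smul_eq_mul]

theorem isOpen_lnOmega (Fc : Finset (Finset (Fin N))) (I : Finset (Fin N) → ℝ) :
    IsOpen (lnOmega Fc I) := by
  have hlen : ∀ i j, Continuous fun u : Fin N → ℝ => len I (rOf u) i j := by
    intro i j
    unfold len rOf
    fun_prop
  have : lnOmega Fc I = ⋂ (i) (j) (k) (_ : ({i, j, k} : Finset (Fin N)) ∈ Fc),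
      {u | len I (rOf u) j k < len I (rOf u) i j + len I (rOf u) i k} := by
    ext u
    simp only [Set.mem_iInter, Set.mem_ofPred_eq]
    exact ⟨fun h => h.2, fun h => ⟨fun i => Real.exp_pos _, h⟩⟩
  rw [this]
  refine isOpen_iInter_of_finite fun i => isOpen_iInter_of_finite fun j =>
    isOpen_iInter_of_finite fun k => isOpen_iInter_of_finite fun _ => ?_
  exact isOpen_lt (hlen j k) ((hlen i j).add (hlen i k))

/-- A point closer to `p ∈ S` than the boundary of the open set `S` lies in `S`. -/
theorem mem_of_dist_lt_frontier {S : Set (Fin N → ℝ)} (hS : IsOpen S) {p q : Fin N → ℝ}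
    (hp : p ∈ S) (hq : dist q p < Metric.infDist p (frontier S)) : q ∈ S := by
  by_contra hqS
  set B := Metric.ball p (Metric.infDist p (frontier S))
  have hB : IsPreconnected B := (convex_ball p _).isPreconnected
  have hpB : p ∈ B := Metric.mem_ball_self (lt_of_le_of_lt dist_nonneg hq)
  have hdisj : ∀ x ∈ B, x ∉ frontier S := fun x hx hxf =>
    absurd (Metric.infDist_le_dist_of_mem (x := p) hxf)
      (not_le.2 (by rw [dist_comm]; exact hx))
  have hcov : B ⊆ S ∪ (closure S)ᶜ := fun x hx => by
    by_cases h : x ∈ closure S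
    · left
      by_contra hxS
      exact hdisj x hx (by rw [hS.frontier_eq]; exact ⟨h, hxS⟩)
    · exact Or.inr h
  have hq' : q ∈ (closure S)ᶜ := (hcov hq).resolve_left hqS
  obtain ⟨x, -, hx1, hx2⟩ := hB S (closure S)ᶜ hS isClosed_closure.isOpen_compl hcov
    ⟨p, hpB, hp⟩ ⟨q, hq, hq'⟩
  exact hx2 (subset_closure hx1)

/-- with αχ(M) ≤ 0, p ∈ ln Ω ∩ {Σu_i = 0} a constant α-curvature
point, F̃ any convex C¹ function on ℝ^N with ∂F̃/∂u_i = K̃_i − s_α r_i^α, and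
ξ a Euclidean unit vector with Σξ_i = 0, the function φ_ξ(t) = F̃(p + tξ)
satisfies: φ_ξ'(0) = 0, φ_ξ' is nondecreasing on ℝ, φ_ξ' is strictly
increasing on (−δ,δ) whenever 0 < δ < dist(p, ∂(ln Ω)), and t = 0 is the
unique zero of φ_ξ'. -/
theorem stmt10 {N : ℕ} (Fc : Finset (Finset (Fin N))) (hT : IsTriangulation Fc)
    (I : Finset (Fin N) → ℝ) (hI : ∀ e ∈ edges Fc, 0 ≤ I e) (α : ℝ)
    (hαχ : α * (chi Fc : ℝ) ≤ 0)
    (p : Fin N → ℝ) (hp : p ∈ lnOmega Fc I) (hpsum : ∑ i, p i = 0)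
    (hconst : ∀ i : Fin N,
      K Fc I (rOf p) i = sA Fc α (rOf p) * rOf p i ^ α)
    (F : (Fin N → ℝ) → ℝ) (hFconv : ConvexOn ℝ Set.univ F) (hFC1 : ContDiff ℝ 1 F)
    (hFgrad : ∀ u : Fin N → ℝ, ∀ i : Fin N,
      HasDerivAt (fun s : ℝ => F (Function.update u i s)) (extGrad Fc I α u i) (u i))
    (ξ : Fin N → ℝ) (hξ : ∑ i, ξ i ^ 2 = 1) (hξ0 : ∑ i, ξ i = 0) :
    deriv (fun t : ℝ => F (p + t • ξ)) 0 = 0 ∧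
    Monotone (deriv fun t : ℝ => F (p + t • ξ)) ∧
    (∀ δ : ℝ, 0 < δ → δ < Metric.infDist p (frontier (lnOmega Fc I)) →
      StrictMonoOn (deriv fun t : ℝ => F (p + t • ξ)) (Set.Ioo (-δ) δ)) ∧
    (∀ t : ℝ, deriv (fun t : ℝ => F (p + t • ξ)) t = 0 → t = 0) := by
  have hdF := fun t => hasDerivAt_line (hFC1.differentiable one_ne_zero) hFgrad p ξ t
  have hderiv : (deriv fun t : ℝ => F (p + t • ξ))
      = fun t => ∑ i, ξ i * extGrad Fc I α (p + t • ξ) i := funext fun t => (hdF t).deriv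
  have hzero : deriv (fun t : ℝ => F (p + t • ξ)) 0 = 0 := by
    rw [hderiv]
    refine Finset.sum_eq_zero fun i _ => ?_
    rw [zero_smul, add_zero, extGrad, Kt_eq_K, hconst i, sub_self, mul_zero]
  have hmono : Monotone (deriv fun t : ℝ => F (p + t • ξ)) := by
    have hconv : ConvexOn ℝ Set.univ fun t : ℝ => F (p + t • ξ) := by
      refine ⟨convex_univ, fun x _ y _ a b ha hb hab => ?_⟩
      obtain rfl : b = 1 - a := by linarith
      have e : p + (a • x + (1 - a) • y) • ξ = a • (p + x • ξ) + (1 - a) • (p + y • ξ) := by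
        simp only [smul_eq_mul]
        module
      change F (p + (a • x + (1 - a) • y) • ξ) ≤ _
      rw [e]
      exact hFconv.2 (Set.mem_univ _) (Set.mem_univ _) ha hb hab
    exact monotoneOn_univ.1 (hconv.monotoneOn_deriv fun t _ => (hdF t).differentiableAt)
  have : Nonempty (Fin N) := hT.conn.nonempty
  have hstrict : ∀ δ : ℝ, (∀ t ∈ Set.Ioo (-δ) δ, p + t • ξ ∈ lnOmega Fc I) →
      StrictMonoOn (deriv fun t : ℝ => F (p + t • ξ)) (Set.Ioo (-δ) δ) := by
    intro δ hδ
    have hex : ∀ t ∈ Set.Ioo (-δ) δ, ∃ d : ℝ, 0 < d ∧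
        HasDerivAt (deriv fun t : ℝ => F (p + t • ξ)) d t := by
      intro t ht
      obtain ⟨d1, h1, hd1⟩ := hasDerivAt_curv hT hI p hξ hξ0 (hδ t ht)
      obtain ⟨d2, h2, hd2⟩ := hasDerivAt_alpha hαχ p ξ t
      refine ⟨d1 + d2, by linarith, ?_⟩
      rw [hderiv]
      refine (hd1.add hd2).congr_of_eventuallyEq (Eventually.of_forall fun s => ?_)
      simp only [Pi.add_apply, extGrad, sub_eq_add_neg,
        Finset.sum_add_distrib, mul_add, mul_neg, Finset.sum_neg_distrib]
    refine strictMonoOn_of_deriv_pos (convex_Ioo _ _) (fun t ht => ?_) fun t ht => ?_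
    · obtain ⟨d, -, hd⟩ := hex t ht
      exact hd.continuousAt.continuousWithinAt
    · rw [interior_Ioo] at ht
      obtain ⟨d, hd0, hd⟩ := hex t ht
      rwa [hd.deriv]
  refine ⟨hzero, hmono, fun δ hδ hlt => hstrict δ fun t ht => ?_, fun t ht => ?_⟩
  -- The distance is the sup distance, for which `ξ` has norm at most `1` as well.
  · have hnorm : ‖ξ‖ ≤ 1 := by
      refine (pi_norm_le_iff_of_nonneg zero_le_one).2 fun i => ?_
      have : ξ i ^ 2 ≤ 1 := hξ ▸
        Finset.single_le_sum (f := fun i => ξ i ^ 2) (fun i _ => sq_nonneg _) (Finset.mem_univ i)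
      rw [Real.norm_eq_abs]
      exact (sq_le_one_iff_abs_le_one _).1 this
    refine mem_of_dist_lt_frontier (isOpen_lnOmega Fc I) hp (lt_of_le_of_lt ?_ hlt)
    rw [dist_eq_norm, add_sub_cancel_left, norm_smul, Real.norm_eq_abs]
    exact (mul_le_of_le_one_right (abs_nonneg t) hnorm).trans (abs_lt.2 ht).le
  · obtain ⟨δ, hδ, hsub⟩ : ∃ δ : ℝ, 0 < δ ∧ ∀ t ∈ Set.Ioo (-δ) δ, p + t • ξ ∈ lnOmega Fc I := by
      have hcont : Continuous fun t : ℝ => p + t • ξ := by fun_prop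
      have hnhds : (fun t : ℝ => p + t • ξ) ⁻¹' lnOmega Fc I ∈ 𝓝 (0 : ℝ) :=
        ((isOpen_lnOmega Fc I).preimage hcont).mem_nhds (by simpa using hp)
      obtain ⟨δ, hδ, hball⟩ := Metric.mem_nhds_iff.1 hnhds
      refine ⟨δ, hδ, fun t ht => hball ?_⟩
      rw [Real.ball_eq_Ioo]
      simpa using ht
    have hs := hstrict δ hsub
    have h0 : (0 : ℝ) ∈ Set.Ioo (-δ) δ := ⟨by linarith, hδ⟩
    rcases lt_trichotomy t 0 with h | h | h
    · have h1 := hs (a := -(δ / 2)) ⟨by linarith, by linarith⟩ h0 (by linarith)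
      rcases le_total t (-(δ / 2)) with h2 | h2
      · linarith [hmono h2]
      · linarith [hs (a := t) ⟨by linarith, by linarith⟩ h0 h]
    · exact h
    · have h1 := hs h0 (b := δ / 2) ⟨by linarith, by linarith⟩ (by linarith)
      rcases le_total (δ / 2) t with h2 | h2
      · linarith [hmono h2]
      · linarith [hs h0 (b := t) ⟨by linarith, by linarith⟩ h]

end IDCP
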